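/- Let γ be an affinely parametrized geodesic of a warped product M̂ ×_f Y with tangent N = (N̂, N̄), and E(u) a parallel-transported vector field along γ with E(0) = e. Then g(N, E) is constant, equal to a := g(N(0), e), and the base component of E satisfies the transport equation N̂^a ∇̂_a E^b = ( a − ĝ(N̂, Ê) ) f⁻¹ (grad f)^b, which involves only quantities of the base (M̂, ĝ). In particular, if e is orthogonal to N(0) (a = 0), this reduces to N̂^b ∇̂_b Ê^a = −( ĝ_{bc} N̂^b Ê^c ) ∇̂^a (ln f), and if moreover e^a = 0 then Ê^a(u) = 0 for all u. -/

import Mathlib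

open Filter MeasureTheory
open scoped BigOperators Topology

noncomputable section

namespace Paper

variable {ι : Type*} [Fintype ι] [DecidableEq ι]
variable {κ : Type*} [Fintype κ] [DecidableEq κ]

/-- Coordinate partial derivative of a scalar field in the direction `ρ`. -/
def pd (h : (ι → ℝ) → ℝ) (ρ : ι) (x : ι → ℝ) : ℝ :=
  fderiv ℝ h x (Pi.single ρ 1)

/-- The inverse metric. -/
def ginv (g : (ι → ℝ) → Matrix ι ι ℝ) (x : ι → ℝ) : Matrix ι ι ℝ :=
  (g x)⁻¹

/-- Christoffel symbols `Γ^μ_{ρσ} = ½ g^{μν}(∂_ρ g_{νσ} + ∂_σ g_{νρ} − ∂_ν g_{ρσ})`. -/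
def Γc (g : (ι → ℝ) → Matrix ι ι ℝ) (μ ρ σ : ι) (x : ι → ℝ) : ℝ :=
  (1 / 2) * ∑ ν, ginv g x μ ν *
    (pd (fun y => g y ν σ) ρ x + pd (fun y => g y ν ρ) σ x - pd (fun y => g y ρ σ) ν x)

/-- Riemann curvature tensor `R^α_{βμν}`. -/
def Riem (g : (ι → ℝ) → Matrix ι ι ℝ) (α β μ ν : ι) (x : ι → ℝ) : ℝ :=
  pd (Γc g α ν β) μ x - pd (Γc g α μ β) ν x
    + ∑ lam, Γc g α μ lam x * Γc g lam ν β x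
    - ∑ lam, Γc g α ν lam x * Γc g lam μ β x

/-- Riemann tensor with the first index lowered, `R_{μνρσ} = g_{μλ} R^λ_{νρσ}`. -/
def RiemLow (g : (ι → ℝ) → Matrix ι ι ℝ) (μ ν ρ σ : ι) (x : ι → ℝ) : ℝ :=
  ∑ lam, g x μ lam * Riem g lam ν ρ σ x

/-- Ricci tensor `R_{μν} = R^ρ_{μρν}`. -/
def Ric (g : (ι → ℝ) → Matrix ι ι ℝ) (μ ν : ι) (x : ι → ℝ) : ℝ :=
  ∑ ρ, Riem g ρ μ ρ ν x

/-- Scalar product of two vectors with respect to the metric at `x`. -/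
def sq (g : (ι → ℝ) → Matrix ι ι ℝ) (x : ι → ℝ) (v w : ι → ℝ) : ℝ :=
  ∑ μ, ∑ ν, g x μ ν * v μ * w ν

/-- Velocity (tangent vector field) of a parametrized curve. -/
def vel (γ : ℝ → ι → ℝ) (u : ℝ) : ι → ℝ :=
  fun μ => deriv (fun w => γ w μ) u

/-- Covariant derivative, along the curve `γ`, of a vector field `V` given along `γ`. -/
def covD (g : (ι → ℝ) → Matrix ι ι ℝ) (γ V : ℝ → ι → ℝ) (u : ℝ) (μ : ι) : ℝ :=
  deriv (fun w => V w μ) u + ∑ ρ, ∑ σ, Γc g μ ρ σ (γ u) * vel γ u ρ * V u σ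

/-- The (affinely parametrized) geodesic equation at parameter value `u`. -/
def GeodesicAt (g : (ι → ℝ) → Matrix ι ι ℝ) (γ : ℝ → ι → ℝ) (u : ℝ) : Prop :=
  ∀ μ, covD g γ (vel γ) u μ = 0

/-- `γ` is an affinely parametrized geodesic of `g`. -/
def IsGeodesic (g : (ι → ℝ) → Matrix ι ι ℝ) (γ : ℝ → ι → ℝ) : Prop :=
  ∀ u, GeodesicAt g γ u

/-- `E` is parallelly transported along `γ`. -/
def IsParallel (g : (ι → ℝ) → Matrix ι ι ℝ) (γ E : ℝ → ι → ℝ) : Prop :=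
  ∀ u μ, covD g γ E u μ = 0

def SmoothCurve (γ : ℝ → ι → ℝ) : Prop :=
  ∀ μ, ContDiff ℝ (⊤ : ℕ∞) fun u => γ u μ

/-- A smooth symmetric everywhere-nondegenerate metric. -/
def SmoothMetric (g : (ι → ℝ) → Matrix ι ι ℝ) : Prop :=
  (∀ μ ν, ContDiff ℝ (⊤ : ℕ∞) fun x => g x μ ν) ∧
    (∀ x μ ν, g x μ ν = g x ν μ) ∧ ∀ x, IsUnit (g x).det

/-- Lorentzian signature `(−,+,…,+)`: there is a timelike vector whose `g`-orthogonal
complement is positive definite. -/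
def Lorentzian (g : (ι → ℝ) → Matrix ι ι ℝ) : Prop :=
  SmoothMetric g ∧
    ∀ x, ∃ t : ι → ℝ, sq g x t t < 0 ∧ ∀ v : ι → ℝ, sq g x t v = 0 → v ≠ 0 → 0 < sq g x v v

/-- Riemannian (positive definite) metric. -/
def Riemannian (g : (ι → ℝ) → Matrix ι ι ℝ) : Prop :=
  SmoothMetric g ∧ ∀ x, ∀ v : ι → ℝ, v ≠ 0 → 0 < sq g x v v

def NullVec (g : (ι → ℝ) → Matrix ι ι ℝ) (x v : ι → ℝ) : Prop :=
  sq g x v v = 0 ∧ v ≠ 0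

/-- A time orientation: an everywhere timelike vector field. -/
def TimeOrientation (g : (ι → ℝ) → Matrix ι ι ℝ) (T : (ι → ℝ) → ι → ℝ) : Prop :=
  ∀ x, sq g x (T x) (T x) < 0

/-- `v` is a future-pointing causal vector at `x` (wrt the time orientation `T`). -/
def FutureCausal (g : (ι → ℝ) → Matrix ι ι ℝ) (T : (ι → ℝ) → ι → ℝ) (x v : ι → ℝ) : Prop :=
  sq g x v v ≤ 0 ∧ v ≠ 0 ∧ sq g x (T x) v < 0

/-- `S` is met exactly once by every inextendible future-directed causal curve
(inextendibility being encoded by parametrization by Euclidean arclength on all of `ℝ`). -/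
def IsCauchySurface (g : (ι → ℝ) → Matrix ι ι ℝ) (T : (ι → ℝ) → ι → ℝ)
    (S : Set (ι → ℝ)) : Prop :=
  ∀ γ : ℝ → ι → ℝ, (∀ μ, Differentiable ℝ fun u => γ u μ) →
    (∀ u, FutureCausal g T (γ u) (vel γ u)) →
    (∀ u, ∑ μ, (vel γ u μ) ^ 2 = 1) → ∃! u, γ u ∈ S

/-- `g`-gradient vector of a scalar function. -/
def gradVec (g : (ι → ℝ) → Matrix ι ι ℝ) (τ : (ι → ℝ) → ℝ) (x : ι → ℝ) : ι → ℝ :=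
  fun μ => ∑ ν, ginv g x μ ν * pd τ ν x

/-- Existence of a non-compact (spacelike) Cauchy hypersurface, encoded as a regular
level set of a smooth function with timelike gradient. -/
def HasNoncompactCauchySurface (g : (ι → ℝ) → Matrix ι ι ℝ)
    (T : (ι → ℝ) → ι → ℝ) : Prop :=
  ∃ τ : (ι → ℝ) → ℝ, ContDiff ℝ (⊤ : ℕ∞) τ ∧ ¬ IsCompact {x | τ x = 0} ∧
    (∀ x, τ x = 0 → sq g x (gradVec g τ x) (gradVec g τ x) < 0) ∧
    IsCauchySurface g T {x | τ x = 0}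

/-- Null geodesic completeness: every null initial datum extends to a geodesic
defined for all values of the affine parameter. -/
def NullComplete (g : (ι → ℝ) → Matrix ι ι ℝ) : Prop :=
  ∀ x v : ι → ℝ, NullVec g x v →
    ∃ γ : ℝ → ι → ℝ, SmoothCurve γ ∧ γ 0 = x ∧ vel γ 0 = v ∧ IsGeodesic g γ

/-- Future null geodesic completeness. -/
def FutureNullComplete (g : (ι → ℝ) → Matrix ι ι ℝ) (T : (ι → ℝ) → ι → ℝ) : Prop :=
  ∀ x v : ι → ℝ, NullVec g x v → FutureCausal g T x v →
    ∃ γ : ℝ → ι → ℝ, SmoothCurve γ ∧ γ 0 = x ∧ vel γ 0 = v ∧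
      ∀ u, 0 ≤ u → GeodesicAt g γ u

/-! ### Submanifolds given implicitly as regular zero sets -/

/-- Differential (lowered normal covectors) of the defining map `F`. -/
def dFm (F : (ι → ℝ) → κ → ℝ) (α : κ) (μ : ι) (x : ι → ℝ) : ℝ :=
  pd (fun y => F y α) μ x

/-- The normal vectors `ν_α = grad F^α` spanning the normal space. -/
def normalBasis (g : (ι → ℝ) → Matrix ι ι ℝ) (F : (ι → ℝ) → κ → ℝ) (α : κ)
    (x : ι → ℝ) : ι → ℝ :=
  fun μ => ∑ ν, ginv g x μ ν * dFm F α ν x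

/-- Gram matrix `W_{αβ} = g(ν_α, ν_β)` of the normals. -/
def gram (g : (ι → ℝ) → Matrix ι ι ℝ) (F : (ι → ℝ) → κ → ℝ) (x : ι → ℝ) :
    Matrix κ κ ℝ :=
  Matrix.of fun α β => ∑ μ, dFm F α μ x * normalBasis g F β x μ

/-- The (contravariant) orthogonal projector onto the tangent space of `{F = 0}`. -/
def tanProj (g : (ι → ℝ) → Matrix ι ι ℝ) (F : (ι → ℝ) → κ → ℝ) (x : ι → ℝ)
    (μ ν : ι) : ℝ :=
  ginv g x μ ν -
    ∑ α, ∑ β, (gram g F x)⁻¹ α β * normalBasis g F α x μ * normalBasis g F β x ν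

/-- Covariant Hessian `∇_μ ∇_ν F^α`. -/
def hessF (g : (ι → ℝ) → Matrix ι ι ℝ) (F : (ι → ℝ) → κ → ℝ) (α : κ) (μ ν : ι)
    (x : ι → ℝ) : ℝ :=
  pd (fun y => dFm F α ν y) μ x - ∑ lam, Γc g lam μ ν x * dFm F α lam x

/-- The expansion `θ(n)` of the submanifold `{F = 0}` along the normal
`n = ∑ c_α ν_α`, namely `θ(n) = ∑_α c_α h^{μν} ∇_μ∇_ν F^α`. -/
def expansionCoeff (g : (ι → ℝ) → Matrix ι ι ℝ) (F : (ι → ℝ) → κ → ℝ) (x : ι → ℝ)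
    (c : κ → ℝ) : ℝ :=
  ∑ α, c α * ∑ μ, ∑ ν, tanProj g F x μ ν * hessF g F α μ ν x

/-- `v` is tangent to the level set `{F = 0}` at `x`. -/
def TangentTo (F : (ι → ℝ) → κ → ℝ) (x v : ι → ℝ) : Prop :=
  ∀ α, ∑ μ, dFm F α μ x * v μ = 0

/-- The normal vector with components `c` in the basis of normals. -/
def NormalComb (g : (ι → ℝ) → Matrix ι ι ℝ) (F : (ι → ℝ) → κ → ℝ) (x : ι → ℝ)
    (c : κ → ℝ) : ι → ℝ :=
  fun μ => ∑ α, c α * normalBasis g F α x μ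

/-- A closed (compact without boundary) spacelike submanifold, given as the regular
zero set of the smooth map `F`, of co-dimension `card κ`. -/
def ClosedSpacelikeSubmanifold (g : (ι → ℝ) → Matrix ι ι ℝ)
    (F : (ι → ℝ) → κ → ℝ) : Prop :=
  (∀ α, ContDiff ℝ (⊤ : ℕ∞) fun x => F x α) ∧
    IsCompact {x | ∀ α, F x α = 0} ∧ {x | ∀ α, F x α = 0}.Nonempty ∧
    (∀ x, (∀ α, F x α = 0) → IsUnit (gram g F x).det) ∧
    (∀ x, (∀ α, F x α = 0) → ∀ v, TangentTo F x v → v ≠ 0 → 0 < sq g x v v)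

/-- Future-trapped: every future-pointing causal normal has negative expansion. -/
def FutureTrapped (g : (ι → ℝ) → Matrix ι ι ℝ) (T : (ι → ℝ) → ι → ℝ)
    (F : (ι → ℝ) → κ → ℝ) : Prop :=
  ∀ x, (∀ α, F x α = 0) → ∀ c : κ → ℝ,
    FutureCausal g T x (NormalComb g F x c) → expansionCoeff g F x c < 0

/-! ### Warped products -/

def basePt {d₁ d₂ : ℕ} (x : (Fin d₁ ⊕ Fin d₂) → ℝ) : Fin d₁ → ℝ :=
  fun a => x (Sum.inl a)

def fibPt {d₁ d₂ : ℕ} (x : (Fin d₁ ⊕ Fin d₂) → ℝ) : Fin d₂ → ℝ :=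
  fun i => x (Sum.inr i)

/-- The warped product metric `g = ĝ + f² ḡ` in adapted coordinates. -/
def warped {d₁ d₂ : ℕ} (gB : (Fin d₁ → ℝ) → Matrix (Fin d₁) (Fin d₁) ℝ)
    (gF : (Fin d₂ → ℝ) → Matrix (Fin d₂) (Fin d₂) ℝ) (f : (Fin d₁ → ℝ) → ℝ) :
    ((Fin d₁ ⊕ Fin d₂) → ℝ) → Matrix (Fin d₁ ⊕ Fin d₂) (Fin d₁ ⊕ Fin d₂) ℝ :=
  fun x => Matrix.of fun μ ν =>
    match μ, ν with
    | Sum.inl a, Sum.inl b => gB (basePt x) a b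
    | Sum.inl _, Sum.inr _ => 0
    | Sum.inr _, Sum.inl _ => 0
    | Sum.inr i, Sum.inr j => (f (basePt x)) ^ 2 * gF (fibPt x) i j

/-- Projection of a spacetime curve to the base. -/
def baseCurve {d₁ d₂ : ℕ} (γ : ℝ → (Fin d₁ ⊕ Fin d₂) → ℝ) : ℝ → Fin d₁ → ℝ :=
  fun u => basePt (γ u)

/-- Projection of a spacetime curve to the fiber. -/
def fibCurve {d₁ d₂ : ℕ} (γ : ℝ → (Fin d₁ ⊕ Fin d₂) → ℝ) : ℝ → Fin d₂ → ℝ :=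
  fun u => fibPt (γ u)

/-- Lift of a base vector to the warped product (vanishing fiber components). -/
def liftVec {d₁ d₂ : ℕ} (v : Fin d₁ → ℝ) : (Fin d₁ ⊕ Fin d₂) → ℝ :=
  fun μ => match μ with
  | Sum.inl a => v a
  | Sum.inr _ => 0

/-- Lift of a base vector field (e.g. a time orientation) to the warped product. -/
def liftT {d₁ d₂ : ℕ} (T : (Fin d₁ → ℝ) → Fin d₁ → ℝ) :
    ((Fin d₁ ⊕ Fin d₂) → ℝ) → (Fin d₁ ⊕ Fin d₂) → ℝ :=
  fun x => liftVec (T (basePt x))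

/-- Defining map of the lift `ζ_p ⊆ Y_p` of the submanifold `{Fb = 0} ⊆ Y`. -/
def liftF {d₁ d₂ m' : ℕ} (p : Fin d₁ → ℝ) (Fb : (Fin d₂ → ℝ) → Fin m' → ℝ) :
    ((Fin d₁ ⊕ Fin d₂) → ℝ) → (Fin d₁ ⊕ Fin m') → ℝ :=
  fun x α => match α with
  | Sum.inl a => x (Sum.inl a) - p a
  | Sum.inr β => Fb (fibPt x) β

/-- Covariant Hessian `∇_μ∇_ν f` of a scalar function. -/
def hess (g : (ι → ℝ) → Matrix ι ι ℝ) (f : (ι → ℝ) → ℝ) (μ ν : ι) (x : ι → ℝ) : ℝ :=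
  pd (fun y => pd f ν y) μ x - ∑ lam, Γc g lam μ ν x * pd f lam x

/-- `∇^μ f ∇_μ f`. -/
def gradSq (g : (ι → ℝ) → Matrix ι ι ℝ) (f : (ι → ℝ) → ℝ) (x : ι → ℝ) : ℝ :=
  ∑ μ, ∑ ν, ginv g x μ ν * pd f μ x * pd f ν x

/-! ### Parametrized submanifolds and their expansions -/

/-- Partial derivative of a parametrization `φ`. -/
def dpar {k : ℕ} (φ : (Fin k → ℝ) → ι → ℝ) (A : Fin k) (μ : ι)
    (y : Fin k → ℝ) : ℝ :=
  fderiv ℝ (fun z => φ z μ) y (Pi.single A 1)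

/-- First fundamental form of a parametrized submanifold. -/
def firstFF {k : ℕ} (g : (ι → ℝ) → Matrix ι ι ℝ) (φ : (Fin k → ℝ) → ι → ℝ)
    (y : Fin k → ℝ) : Matrix (Fin k) (Fin k) ℝ :=
  Matrix.of fun A B => ∑ μ, ∑ ν, g (φ y) μ ν * dpar φ A μ y * dpar φ B ν y

/-- The expansion `θ(n) = n_μ H^μ` of a parametrized submanifold along a normal `n`,
via `θ(n) = −γ^{AB} n_μ (∂_A∂_B φ^μ + Γ^μ_{ρσ} ∂_A φ^ρ ∂_B φ^σ)`. -/
def expansionPar {k : ℕ} (g : (ι → ℝ) → Matrix ι ι ℝ) (φ : (Fin k → ℝ) → ι → ℝ)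
    (y : Fin k → ℝ) (n : ι → ℝ) : ℝ :=
  - ∑ A, ∑ B, (firstFF g φ y)⁻¹ A B *
      ∑ μ, (∑ ν, g (φ y) μ ν * n ν) *
        (fderiv ℝ (fun z => dpar φ B μ z) y (Pi.single A 1)
          + ∑ ρ, ∑ σ, Γc g μ ρ σ (φ y) * dpar φ A ρ y * dpar φ B σ y)

/-!
A connection compatible with the metric makes the product of two parallel fields constant; the
tangent of a geodesic is parallel, so `g(N, E) = a` throughout. In a warped product the only
Christoffel symbols `Γ^b_{ρσ}` with upper index in the base are `Γ̂^b_{ac}` and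
`Γ^b_{ij} = -f ḡ_{ij} (grad f)^b`, so the base part of `N^μ ∇_μ E = 0` reads
`∇̂_N̂ Ê = f ḡ(N̄, Ē) grad f`. Since `a = ĝ(N̂, Ê) + f² ḡ(N̄, Ē)`, the fiber quantity `ḡ(N̄, Ē)`
can be eliminated. For `a = 0` what remains is a homogeneous linear differential equation for `Ê`,
whose only solution with zero initial value is zero.
-/

open scoped Matrix

section Calculus

variable {m n : Type*} [Fintype n]

lemma hasDerivAt_dotProduct {v w : ℝ → n → ℝ} {v' w' : n → ℝ} {u : ℝ}
    (hv : HasDerivAt v v' u) (hw : HasDerivAt w w' u) :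
    HasDerivAt (fun t => v t ⬝ᵥ w t) (v' ⬝ᵥ w u + v u ⬝ᵥ w') u := by
  refine (HasDerivAt.fun_sum fun i _ =>
    (hasDerivAt_pi.1 hv i).fun_mul (hasDerivAt_pi.1 hw i)).congr_deriv ?_
  exact Finset.sum_add_distrib

lemma hasDerivAt_mulVec [Finite m] {A : ℝ → Matrix m n ℝ} {A' : Matrix m n ℝ} {v : ℝ → n → ℝ}
    {v' : n → ℝ} {u : ℝ} (hA : ∀ i j, HasDerivAt (fun t => A t i j) (A' i j) u)
    (hv : HasDerivAt v v' u) :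
    HasDerivAt (fun t => A t *ᵥ v t) (A' *ᵥ v u + A u *ᵥ v') u :=
  hasDerivAt_pi.2 fun i => hasDerivAt_dotProduct (hasDerivAt_pi.2 (hA i)) hv

lemma eq_zero_of_hasDerivAt_clm {V : Type*} [NormedAddCommGroup V] [NormedSpace ℝ V]
    {A : ℝ → V →L[ℝ] V} (hA : Continuous A) {y : ℝ → V} (hy : ∀ t, HasDerivAt y (A t (y t)) t)
    {t₀ : ℝ} (h₀ : y t₀ = 0) (t : ℝ) : y t = 0 := by
  obtain ⟨a, b, ht, ht₀⟩ : ∃ a b, t ∈ Set.Ioo a b ∧ t₀ ∈ Set.Ioo a b :=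
    ⟨min t t₀ - 1, max t t₀ + 1, by grind, by grind⟩
  obtain ⟨K, hK⟩ := (isCompact_Icc (a := a) (b := b)).exists_bound_of_continuousOn hA.continuousOn
  have hLip : ∀ s ∈ Set.Ioo a b, LipschitzOnWith K.toNNReal (A s) Set.univ := fun s hs =>
    ((A s).lipschitz.weaken <| NNReal.coe_le_coe.1 <|
      (hK s (Set.Ioo_subset_Icc_self hs)).trans K.le_coe_toNNReal).lipschitzOnWith
  exact ODE_solution_unique_of_mem_Ioo (g := fun _ => 0) hLip ht₀
    (fun s _ => ⟨hy s, Set.mem_univ _⟩)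
    (fun s _ => ⟨by simpa using hasDerivAt_const s (0 : V), Set.mem_univ _⟩) h₀ ht

end Calculus

section Curves

variable {n : Type*} {γ V : ℝ → n → ℝ}

lemma hasDerivAt_vel [Finite n] {u : ℝ} (hV : DifferentiableAt ℝ V u) :
    HasDerivAt V (vel V u) u :=
  hasDerivAt_pi.2 fun i => (differentiableAt_pi.1 hV i).hasDerivAt

lemma SmoothCurve.differentiable [Finite n] (hγ : SmoothCurve γ) : Differentiable ℝ γ :=
  differentiable_pi.2 fun i => (hγ i).differentiable (by simp)

lemma SmoothCurve.vel (hγ : SmoothCurve γ) : SmoothCurve (vel γ) :=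
  fun i => (contDiff_infty_iff_deriv.1 (hγ i)).2

end Curves

section PartialDerivatives

variable {n : Type*} [DecidableEq n] {h k : (n → ℝ) → ℝ} {x : n → ℝ}

lemma pd_const (c : ℝ) (ρ : n) : pd (fun _ => c) ρ x = 0 := by
  simp [pd]

lemma pd_mul [Finite n] (hh : DifferentiableAt ℝ h x) (hk : DifferentiableAt ℝ k x) (ρ : n) :
    pd (fun y => h y * k y) ρ x = h x * pd k ρ x + k x * pd h ρ x := by
  cases nonempty_fintype n
  simp [pd, (hh.hasFDerivAt.fun_mul hk.hasFDerivAt).fderiv]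

lemma pd_log [Finite n] (hh : DifferentiableAt ℝ h x) (hx : h x ≠ 0) (ρ : n) :
    pd (fun y => Real.log (h y)) ρ x = (h x)⁻¹ * pd h ρ x := by
  cases nonempty_fintype n
  simp [pd, (hh.hasFDerivAt.log hx).fderiv]

end PartialDerivatives

lemma fderiv_eq_sum_pd (h : (ι → ℝ) → ℝ) (x v : ι → ℝ) :
    fderiv ℝ h x v = ∑ ρ, pd h ρ x * v ρ := by
  conv_lhs => rw [pi_eq_sum_univ' v]
  simp [pd, mul_comm]

lemma gradVec_log (g : (ι → ℝ) → Matrix ι ι ℝ) {h : (ι → ℝ) → ℝ} {x : ι → ℝ}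
    (hh : DifferentiableAt ℝ h x) (hx : h x ≠ 0) :
    gradVec g (fun y => Real.log (h y)) x = (h x)⁻¹ • gradVec g h x := by
  ext μ
  simp only [gradVec, pd_log hh hx, Pi.smul_apply, smul_eq_mul, Finset.mul_sum]
  exact Finset.sum_congr rfl fun ν _ => by ring

lemma continuous_pd {h : (ι → ℝ) → ℝ} (hh : ContDiff ℝ 1 h) (ρ : ι) : Continuous (pd h ρ) :=
  (hh.continuous_fderiv one_ne_zero).clm_apply continuous_const

lemma sq_eq_dotProduct_mulVec {n : Type*} [Fintype n] (g : (n → ℝ) → Matrix n n ℝ)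
    (x v w : n → ℝ) :
    sq g x v w = v ⬝ᵥ g x *ᵥ w := by
  simp only [sq, dotProduct, Matrix.mulVec, Finset.mul_sum]
  exact Finset.sum_congr rfl fun μ _ => Finset.sum_congr rfl fun ν _ => by ring

/-- A semi-Riemannian metric of class `C^n`, given by its components in global coordinates;
`SmoothMetric` is the case `n = ∞`. -/
structure MetricOfClass (n : WithTop ℕ∞) (g : (ι → ℝ) → Matrix ι ι ℝ) : Prop where
  contDiff : ∀ μ ν, ContDiff ℝ n fun x => g x μ ν
  isSymm : ∀ x, (g x).IsSymm
  isUnit_det : ∀ x, IsUnit (g x).det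

lemma SmoothMetric.metricOfClass {g : (ι → ℝ) → Matrix ι ι ℝ} (hg : SmoothMetric g) (n : ℕ∞) :
    MetricOfClass n g where
  contDiff μ ν := (hg.1 μ ν).of_le (mod_cast le_top)
  isSymm x := Matrix.IsSymm.ext fun μ ν => hg.2.1 x ν μ
  isUnit_det := hg.2.2

lemma MetricOfClass.of_le {g : (ι → ℝ) → Matrix ι ι ℝ} {m n : WithTop ℕ∞}
    (hg : MetricOfClass n g) (hmn : m ≤ n) : MetricOfClass m g :=
  ⟨fun μ ν => (hg.contDiff μ ν).of_le hmn, hg.isSymm, hg.isUnit_det⟩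

lemma MetricOfClass.differentiableAt {g : (ι → ℝ) → Matrix ι ι ℝ} (hg : MetricOfClass 1 g)
    {x : ι → ℝ} (μ ν : ι) : DifferentiableAt ℝ (fun y => g y μ ν) x :=
  (hg.contDiff μ ν).differentiable one_ne_zero x

/-- The connection one-form of `g` at `x`, evaluated on `n`: the matrix `Γ^μ_{ρσ} n^ρ` with row
index `μ` and column index `σ`, so that `∇_n V = ∂_n V + ω(n) V`. -/
def connMatrix (g : (ι → ℝ) → Matrix ι ι ℝ) (x n : ι → ℝ) : Matrix ι ι ℝ :=
  Matrix.of fun μ σ => ∑ ρ, Γc g μ ρ σ x * n ρ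

lemma covD_eq_vel_add_connMatrix_mulVec (g : (ι → ℝ) → Matrix ι ι ℝ) (γ V : ℝ → ι → ℝ) (u : ℝ) :
    covD g γ V u = vel V u + connMatrix g (γ u) (vel γ u) *ᵥ V u := by
  ext μ
  simp only [covD, connMatrix, vel, Pi.add_apply, Matrix.mulVec, dotProduct, Matrix.of_apply,
    Finset.sum_mul]
  rw [Finset.sum_comm]

section Compatibility

variable {g : (ι → ℝ) → Matrix ι ι ℝ}

lemma sum_metric_mul_Γc {x : ι → ℝ} (hx : IsUnit (g x).det) (ν ρ σ : ι) :
    ∑ μ, g x ν μ * Γc g μ ρ σ x =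
      (1 / 2) * (pd (fun y => g y ν σ) ρ x + pd (fun y => g y ν ρ) σ x
        - pd (fun y => g y ρ σ) ν x) := by
  let K : ι → ℝ := fun ν => pd (fun y => g y ν σ) ρ x + pd (fun y => g y ν ρ) σ x
    - pd (fun y => g y ρ σ) ν x
  have hΓ : (fun μ => Γc g μ ρ σ x) = (1 / 2 : ℝ) • (g x)⁻¹ *ᵥ K := rfl
  calc ∑ μ, g x ν μ * Γc g μ ρ σ x = (g x *ᵥ ((1 / 2 : ℝ) • (g x)⁻¹ *ᵥ K)) ν := by rw [← hΓ]; rfl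
    _ = (1 / 2) * K ν := by
      rw [Matrix.mulVec_smul, Matrix.mulVec_mulVec, Matrix.mul_nonsing_inv _ hx,
        Matrix.one_mulVec, Pi.smul_apply, smul_eq_mul]

lemma pd_metric_eq_sum_Γc (hsymm : ∀ y, (g y).IsSymm) {x : ι → ℝ} (hx : IsUnit (g x).det)
    (μ ν ρ : ι) :
    pd (fun y => g y μ ν) ρ x
      = ∑ lam, g x ν lam * Γc g lam ρ μ x + ∑ lam, g x μ lam * Γc g lam ρ ν x := by
  have hpd : ∀ i j, (fun y => g y i j) = fun y => g y j i :=
    fun i j => funext fun y => (hsymm y).apply j i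
  rw [sum_metric_mul_Γc hx, sum_metric_mul_Γc hx, hpd ν μ, hpd ν ρ, hpd ρ μ]
  ring

lemma fderiv_metric_eq_connMatrix (hsymm : ∀ y, (g y).IsSymm) {x : ι → ℝ}
    (hx : IsUnit (g x).det) (n : ι → ℝ) :
    (Matrix.of fun μ ν => fderiv ℝ (fun y => g y μ ν) x n)
      = (connMatrix g x n)ᵀ * g x + g x * connMatrix g x n := by
  have hmul : ∀ μ ν, (g x * connMatrix g x n) μ ν
      = ∑ ρ, (∑ lam, g x μ lam * Γc g lam ρ ν x) * n ρ := fun μ ν => by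
    simp only [Matrix.mul_apply, connMatrix, Matrix.of_apply, Finset.mul_sum, Finset.sum_mul,
      mul_assoc]
    exact Finset.sum_comm
  have htranspose : (connMatrix g x n)ᵀ * g x = (g x * connMatrix g x n)ᵀ := by
    rw [Matrix.transpose_mul, hsymm x]
  ext μ ν
  rw [htranspose, Matrix.add_apply, Matrix.transpose_apply, hmul, hmul, Matrix.of_apply,
    fderiv_eq_sum_pd, ← Finset.sum_add_distrib]
  simp only [pd_metric_eq_sum_Γc hsymm hx, add_mul]

lemma hasDerivAt_sq (hsymm : ∀ y, (g y).IsSymm) {γ V W : ℝ → ι → ℝ} {u : ℝ}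
    (hg : ∀ μ ν, DifferentiableAt ℝ (fun x => g x μ ν) (γ u)) (hdet : IsUnit (g (γ u)).det)
    (hγ : DifferentiableAt ℝ γ u) (hV : DifferentiableAt ℝ V u) (hW : DifferentiableAt ℝ W u) :
    HasDerivAt (fun t => sq g (γ t) (V t) (W t))
      (sq g (γ u) (covD g γ V u) (W u) + sq g (γ u) (V u) (covD g γ W u)) u := by
  have hgγ : ∀ μ ν, HasDerivAt (fun t => g (γ t) μ ν)
      (((connMatrix g (γ u) (vel γ u))ᵀ * g (γ u) + g (γ u) * connMatrix g (γ u) (vel γ u)) μ ν)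
      u := fun μ ν => by
    rw [← fderiv_metric_eq_connMatrix hsymm hdet]
    exact (hg μ ν).hasFDerivAt.comp_hasDerivAt u (hasDerivAt_vel hγ)
  simp only [sq_eq_dotProduct_mulVec]
  refine (hasDerivAt_dotProduct (hasDerivAt_vel hV)
    (hasDerivAt_mulVec hgγ (hasDerivAt_vel hW))).congr_deriv ?_
  simp only [covD_eq_vel_add_connMatrix_mulVec, Matrix.add_mulVec, Matrix.mulVec_add,
    ← Matrix.mulVec_mulVec, add_dotProduct, dotProduct_add, Matrix.dotProduct_mulVec (V u),
    Matrix.vecMul_transpose]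
  ring

lemma MetricOfClass.sq_eq_of_isParallel (hg : MetricOfClass 1 g) {γ V W : ℝ → ι → ℝ}
    (hγ : Differentiable ℝ γ) (hV : Differentiable ℝ V) (hW : Differentiable ℝ W)
    (hVp : IsParallel g γ V) (hWp : IsParallel g γ W) (s t : ℝ) :
    sq g (γ s) (V s) (W s) = sq g (γ t) (V t) (W t) := by
  have hderiv : ∀ u, HasDerivAt (fun t => sq g (γ t) (V t) (W t)) 0 u := fun u => by
    have h := hasDerivAt_sq hg.isSymm
      hg.differentiableAt (hg.isUnit_det (γ u))
      (hγ u) (hV u) (hW u)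
    rw [funext (hVp u), funext (hWp u)] at h
    simpa [sq] using h
  exact is_const_of_deriv_eq_zero (fun u => (hderiv u).differentiableAt)
    (fun u => (hderiv u).deriv) s t

end Compatibility

section LinearTransport

variable {g : (ι → ℝ) → Matrix ι ι ℝ}

lemma MetricOfClass.continuous (hg : MetricOfClass 0 g) : Continuous g :=
  continuous_matrix fun μ ν => (hg.contDiff μ ν).continuous

lemma MetricOfClass.continuous_ginv (hg : MetricOfClass 0 g) : Continuous (ginv g) :=
  continuous_iff_continuousAt.2 fun x =>
    (continuousAt_matrix_inv _ (NormedRing.inverse_continuousAt (hg.isUnit_det x).unit)).comp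
      hg.continuous.continuousAt

lemma MetricOfClass.continuous_gradVec (hg : MetricOfClass 0 g) {h : (ι → ℝ) → ℝ}
    (hh : ContDiff ℝ 1 h) : Continuous (gradVec g h) :=
  hg.continuous_ginv.matrix_mulVec (continuous_pi fun ν => continuous_pd hh ν)

lemma MetricOfClass.continuous_Γc (hg : MetricOfClass 1 g) (μ ρ σ : ι) :
    Continuous (Γc g μ ρ σ) := by
  have hpd : ∀ i j k, Continuous (pd (fun y => g y i j) k) :=
    fun i j k => continuous_pd (hg.contDiff i j) k
  have hginv : ∀ ν, Continuous fun x => ginv g x μ ν :=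
    fun ν => (hg.of_le zero_le_one).continuous_ginv.matrix_elem μ ν
  unfold Γc
  fun_prop

lemma MetricOfClass.continuous_connMatrix (hg : MetricOfClass 1 g) {γ N : ℝ → ι → ℝ}
    (hγ : Continuous γ) (hN : Continuous N) :
    Continuous fun u => connMatrix g (γ u) (N u) :=
  continuous_matrix fun μ σ => continuous_finsetSum _ fun ρ _ =>
    ((hg.continuous_Γc μ ρ σ).comp hγ).mul ((continuous_apply ρ).comp hN)

lemma MetricOfClass.eq_zero_of_covD_eq_mulVec (hg : MetricOfClass 1 g) {γ V : ℝ → ι → ℝ}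
    (hγ : Continuous γ) (hvel : Continuous (vel γ)) (hV : Differentiable ℝ V)
    {L : ℝ → Matrix ι ι ℝ} (hL : Continuous L) (hcov : ∀ u, covD g γ V u = L u *ᵥ V u)
    {u₀ : ℝ} (h₀ : V u₀ = 0) (u : ℝ) : V u = 0 := by
  let A : ℝ → (ι → ℝ) →L[ℝ] (ι → ℝ) := fun t =>
    LinearMap.toContinuousLinearMap (Matrix.toLin' (L t - connMatrix g (γ t) (vel γ t)))
  have hA : Continuous A := continuous_clm_apply.2 fun v =>
    (hL.sub (hg.continuous_connMatrix hγ hvel)).matrix_mulVec continuous_const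
  refine eq_zero_of_hasDerivAt_clm hA (fun t => (hasDerivAt_vel (hV t)).congr_deriv ?_) h₀ u
  have hvelV := (covD_eq_vel_add_connMatrix_mulVec g γ V t).symm.trans (hcov t)
  change vel V t = (L t - connMatrix g (γ t) (vel γ t)) *ᵥ V t
  rw [Matrix.sub_mulVec, eq_sub_iff_add_eq, hvelV]

lemma MetricOfClass.eq_zero_of_covD_eq_neg_sq_mul_gradVec (hg : MetricOfClass 1 g)
    {h : (ι → ℝ) → ℝ} (hh : ContDiff ℝ 1 h) {γ V : ℝ → ι → ℝ} (hγ : Continuous γ)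
    (hvel : Continuous (vel γ)) (hV : Differentiable ℝ V)
    (hcov : ∀ u μ, covD g γ V u μ = -sq g (γ u) (vel γ u) (V u) * gradVec g h (γ u) μ)
    {u₀ : ℝ} (h₀ : V u₀ = 0) (u : ℝ) : V u = 0 := by
  have hg₀ : MetricOfClass 0 g := hg.of_le zero_le_one
  refine hg.eq_zero_of_covD_eq_mulVec hγ hvel hV
    (L := fun u => -Matrix.vecMulVec (gradVec g h (γ u)) (vel γ u ᵥ* g (γ u))) ?_ ?_ h₀ u
  · exact (((hg₀.continuous_gradVec hh).comp hγ).matrix_vecMulVec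
      (hvel.matrix_vecMul (hg₀.continuous.comp hγ))).neg
  · intro u
    ext μ
    rw [hcov, sq_eq_dotProduct_mulVec, Matrix.neg_mulVec, Matrix.vecMulVec_mulVec,
      Matrix.dotProduct_mulVec]
    simp [mul_comm]

end LinearTransport

section WarpedProduct

variable {d₁ d₂ : ℕ} {gB : (Fin d₁ → ℝ) → Matrix (Fin d₁) (Fin d₁) ℝ}
  {gF : (Fin d₂ → ℝ) → Matrix (Fin d₂) (Fin d₂) ℝ} {f : (Fin d₁ → ℝ) → ℝ}

lemma hasFDerivAt_comp_basePt {h : (Fin d₁ → ℝ) → ℝ} {x : (Fin d₁ ⊕ Fin d₂) → ℝ}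
    (hh : DifferentiableAt ℝ h (basePt x)) :
    HasFDerivAt (fun y => h (basePt y)) ((fderiv ℝ h (basePt x)).comp
      (Pi.compRightL ℝ (fun _ => ℝ) (Sum.inl : Fin d₁ → Fin d₁ ⊕ Fin d₂))) x :=
  hh.hasFDerivAt.comp x
    (Pi.compRightL ℝ (fun _ => ℝ) (Sum.inl : Fin d₁ → Fin d₁ ⊕ Fin d₂)).hasFDerivAt

lemma hasFDerivAt_comp_fibPt {h : (Fin d₂ → ℝ) → ℝ} {x : (Fin d₁ ⊕ Fin d₂) → ℝ}
    (hh : DifferentiableAt ℝ h (fibPt x)) :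
    HasFDerivAt (fun y => h (fibPt y)) ((fderiv ℝ h (fibPt x)).comp
      (Pi.compRightL ℝ (fun _ => ℝ) (Sum.inr : Fin d₂ → Fin d₁ ⊕ Fin d₂))) x :=
  hh.hasFDerivAt.comp x
    (Pi.compRightL ℝ (fun _ => ℝ) (Sum.inr : Fin d₂ → Fin d₁ ⊕ Fin d₂)).hasFDerivAt

lemma pd_comp_basePt_inl {h : (Fin d₁ → ℝ) → ℝ} {x : (Fin d₁ ⊕ Fin d₂) → ℝ}
    (hh : DifferentiableAt ℝ h (basePt x)) (a : Fin d₁) :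
    pd (fun y => h (basePt y)) (Sum.inl a) x = pd h a (basePt x) := by
  rw [pd, (hasFDerivAt_comp_basePt hh).fderiv, pd, ContinuousLinearMap.comp_apply]
  congr 1
  ext b
  simp [Pi.single_apply]

lemma pd_comp_basePt_inr {h : (Fin d₁ → ℝ) → ℝ} {x : (Fin d₁ ⊕ Fin d₂) → ℝ}
    (hh : DifferentiableAt ℝ h (basePt x)) (i : Fin d₂) :
    pd (fun y => h (basePt y)) (Sum.inr i) x = 0 := by
  rw [pd, (hasFDerivAt_comp_basePt hh).fderiv, ContinuousLinearMap.comp_apply]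
  convert map_zero (fderiv ℝ h (basePt x))
  ext b
  simp

lemma pd_comp_fibPt_inl {h : (Fin d₂ → ℝ) → ℝ} {x : (Fin d₁ ⊕ Fin d₂) → ℝ}
    (hh : DifferentiableAt ℝ h (fibPt x)) (a : Fin d₁) :
    pd (fun y => h (fibPt y)) (Sum.inl a) x = 0 := by
  rw [pd, (hasFDerivAt_comp_fibPt hh).fderiv, ContinuousLinearMap.comp_apply]
  convert map_zero (fderiv ℝ h (fibPt x))
  ext i
  simp

lemma warped_eq_fromBlocks (x : (Fin d₁ ⊕ Fin d₂) → ℝ) :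
    warped gB gF f x
      = Matrix.fromBlocks (gB (basePt x)) 0 0 (f (basePt x) ^ 2 • gF (fibPt x)) := by
  ext (a | i) (b | j) <;> rfl

lemma MetricOfClass.warped {n : WithTop ℕ∞} (hB : MetricOfClass n gB) (hF : MetricOfClass n gF)
    (hf : ContDiff ℝ n f) (hf₀ : ∀ y, f y ≠ 0) : MetricOfClass n (warped gB gF f) where
  contDiff := by
    have hbase : ContDiff ℝ n (basePt : (Fin d₁ ⊕ Fin d₂ → ℝ) → _) :=
      contDiff_pi.2 fun a => contDiff_apply ℝ ℝ (Sum.inl a)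
    have hfib : ContDiff ℝ n (fibPt : (Fin d₁ ⊕ Fin d₂ → ℝ) → _) :=
      contDiff_pi.2 fun i => contDiff_apply ℝ ℝ (Sum.inr i)
    rintro (a | i) (b | j)
    · exact (hB.contDiff a b).comp hbase
    · exact contDiff_const
    · exact contDiff_const
    · exact ((hf.comp hbase).pow 2).mul ((hF.contDiff i j).comp hfib)
  isSymm x := by
    rw [warped_eq_fromBlocks]
    exact (hB.isSymm _).fromBlocks Matrix.transpose_zero ((hF.isSymm _).smul _)
  isUnit_det x := by
    rw [warped_eq_fromBlocks, Matrix.det_fromBlocks_zero₂₁, Matrix.det_smul]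
    exact (hB.isUnit_det _).mul
      ((((isUnit_iff_ne_zero.2 (hf₀ _)).pow 2).pow _).mul (hF.isUnit_det _))

lemma differentiable_baseCurve {γ : ℝ → (Fin d₁ ⊕ Fin d₂) → ℝ} (hγ : Differentiable ℝ γ) :
    Differentiable ℝ (baseCurve γ) :=
  differentiable_pi.2 fun a => differentiable_pi.1 hγ (Sum.inl a)

section PointwiseFormulas

variable {x : (Fin d₁ ⊕ Fin d₂) → ℝ}

lemma sq_warped (v w : (Fin d₁ ⊕ Fin d₂) → ℝ) :
    sq (warped gB gF f) x v w = sq gB (basePt x) (basePt v) (basePt w)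
      + f (basePt x) ^ 2 * sq gF (fibPt x) (fibPt v) (fibPt w) := by
  simp [sq, warped, basePt, fibPt, Finset.mul_sum, mul_assoc]

lemma ginv_warped (hx : IsUnit (warped gB gF f x).det) :
    ginv (warped gB gF f) x
      = Matrix.fromBlocks (ginv gB (basePt x)) 0 0 (f (basePt x) ^ 2 • gF (fibPt x))⁻¹ := by
  rw [warped_eq_fromBlocks, Matrix.det_fromBlocks_zero₂₁, IsUnit.mul_iff] at hx
  rw [ginv, warped_eq_fromBlocks, Matrix.inv_fromBlocks_zero₂₁_of_isUnit_iff _ _ _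
    (by simp only [Matrix.isUnit_iff_isUnit_det, hx.1, hx.2])]
  simp [ginv]

lemma Γc_warped_inl (hx : IsUnit (warped gB gF f x).det) (b : Fin d₁) (ρ σ : Fin d₁ ⊕ Fin d₂) :
    Γc (warped gB gF f) (Sum.inl b) ρ σ x = (1 / 2) * ∑ c, ginv gB (basePt x) b c *
      (pd (fun y => warped gB gF f y (Sum.inl c) σ) ρ x
        + pd (fun y => warped gB gF f y (Sum.inl c) ρ) σ x
        - pd (fun y => warped gB gF f y ρ σ) (Sum.inl c) x) := by
  simp [Γc, ginv_warped hx]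

lemma Γc_warped_inl_inl_inl (hx : IsUnit (warped gB gF f x).det)
    (hB : ∀ a c, DifferentiableAt ℝ (fun y => gB y a c) (basePt x)) (b a c : Fin d₁) :
    Γc (warped gB gF f) (Sum.inl b) (Sum.inl a) (Sum.inl c) x = Γc gB b a c (basePt x) := by
  rw [Γc_warped_inl hx]
  simp only [warped, Matrix.of_apply, pd_comp_basePt_inl (hB _ _), Γc]

lemma Γc_warped_inl_inl_inr (hx : IsUnit (warped gB gF f x).det)
    (hB : ∀ a c, DifferentiableAt ℝ (fun y => gB y a c) (basePt x)) (b a : Fin d₁) (j : Fin d₂) :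
    Γc (warped gB gF f) (Sum.inl b) (Sum.inl a) (Sum.inr j) x = 0 := by
  rw [Γc_warped_inl hx]
  simp [warped, pd_comp_basePt_inr (hB _ _), pd_const]

lemma Γc_warped_inl_inr_inl (hx : IsUnit (warped gB gF f x).det)
    (hB : ∀ a c, DifferentiableAt ℝ (fun y => gB y a c) (basePt x)) (b c : Fin d₁) (i : Fin d₂) :
    Γc (warped gB gF f) (Sum.inl b) (Sum.inr i) (Sum.inl c) x = 0 := by
  rw [Γc_warped_inl hx]
  simp [warped, pd_comp_basePt_inr (hB _ _), pd_const]

lemma Γc_warped_inl_inr_inr (hx : IsUnit (warped gB gF f x).det)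
    (hf : DifferentiableAt ℝ f (basePt x))
    (hF : ∀ i j, DifferentiableAt ℝ (fun y => gF y i j) (fibPt x)) (b : Fin d₁) (i j : Fin d₂) :
    Γc (warped gB gF f) (Sum.inl b) (Sum.inr i) (Sum.inr j) x
      = -f (basePt x) * gF (fibPt x) i j * gradVec gB f (basePt x) b := by
  have hpd : ∀ c, pd (fun y => f (basePt y) ^ 2 * gF (fibPt y) i j) (Sum.inl c) x
      = 2 * f (basePt x) * gF (fibPt x) i j * pd f c (basePt x) := fun c => by
    have hf' := (hasFDerivAt_comp_basePt hf).differentiableAt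
    have hF' := (hasFDerivAt_comp_fibPt (hF i j)).differentiableAt
    simp only [pow_two, pd_mul (hf'.fun_mul hf') hF', pd_mul hf' hf', pd_comp_basePt_inl hf,
      pd_comp_fibPt_inl (hF i j)]
    ring
  rw [Γc_warped_inl hx]
  simp only [warped, Matrix.of_apply, pd_const, hpd, gradVec, Finset.mul_sum]
  exact Finset.sum_congr rfl fun c _ => by ring

end PointwiseFormulas

lemma covD_warped_inl {γ V : ℝ → (Fin d₁ ⊕ Fin d₂) → ℝ} {u : ℝ}
    (hx : IsUnit (warped gB gF f (γ u)).det)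
    (hB : ∀ a c, DifferentiableAt ℝ (fun y => gB y a c) (basePt (γ u)))
    (hf : DifferentiableAt ℝ f (basePt (γ u)))
    (hF : ∀ i j, DifferentiableAt ℝ (fun y => gF y i j) (fibPt (γ u))) (b : Fin d₁) :
    covD (warped gB gF f) γ V u (Sum.inl b)
      = covD gB (baseCurve γ) (baseCurve V) u b
        - f (basePt (γ u)) * sq gF (fibPt (γ u)) (vel (fibCurve γ) u) (fibPt (V u))
          * gradVec gB f (basePt (γ u)) b := by
  have hfiber : ∑ i, ∑ j, Γc (warped gB gF f) (Sum.inl b) (Sum.inr i) (Sum.inr j) (γ u)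
        * vel γ u (Sum.inr i) * V u (Sum.inr j)
      = -(f (basePt (γ u)) * sq gF (fibPt (γ u)) (vel (fibCurve γ) u) (fibPt (V u))
          * gradVec gB f (basePt (γ u)) b) := by
    simp only [Γc_warped_inl_inr_inr hx hf hF, sq, Finset.mul_sum, Finset.sum_mul,
      ← Finset.sum_neg_distrib]
    refine Finset.sum_congr rfl fun i _ => Finset.sum_congr rfl fun j _ => ?_
    simp only [vel, fibCurve, fibPt]
    ring
  simp only [covD, Fintype.sum_sum_type, hfiber, Γc_warped_inl_inl_inl hx hB,
    Γc_warped_inl_inl_inr hx hB, Γc_warped_inl_inr_inl hx hB, zero_mul, Finset.sum_const_zero,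
    add_zero, zero_add]
  rw [← add_assoc, ← sub_eq_add_neg]
  rfl

lemma covD_baseCurve_eq_of_covD_warped_eq_zero {γ V : ℝ → (Fin d₁ ⊕ Fin d₂) → ℝ} {u : ℝ}
    (hx : IsUnit (warped gB gF f (γ u)).det) (hf₀ : f (basePt (γ u)) ≠ 0)
    (hB : ∀ a c, DifferentiableAt ℝ (fun y => gB y a c) (basePt (γ u)))
    (hf : DifferentiableAt ℝ f (basePt (γ u)))
    (hF : ∀ i j, DifferentiableAt ℝ (fun y => gF y i j) (fibPt (γ u))) (b : Fin d₁)
    (hV : covD (warped gB gF f) γ V u (Sum.inl b) = 0) :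
    covD gB (baseCurve γ) (baseCurve V) u b
      = (sq (warped gB gF f) (γ u) (vel γ u) (V u)
          - sq gB (basePt (γ u)) (vel (baseCurve γ) u) (baseCurve V u))
        * (f (basePt (γ u)))⁻¹ * gradVec gB f (basePt (γ u)) b := by
  have hfiber : sq (warped gB gF f) (γ u) (vel γ u) (V u)
        - sq gB (basePt (γ u)) (vel (baseCurve γ) u) (baseCurve V u)
      = f (basePt (γ u)) ^ 2 * sq gF (fibPt (γ u)) (vel (fibCurve γ) u) (fibPt (V u)) :=
    sub_eq_iff_eq_add'.2 (sq_warped _ _)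
  rw [covD_warped_inl hx hB hf hF, sub_eq_zero] at hV
  rw [hV, hfiber]
  field_simp

lemma covD_baseCurve_eq_neg_sq_mul_gradVec_log {γ V : ℝ → (Fin d₁ ⊕ Fin d₂) → ℝ} {u : ℝ}
    (hx : IsUnit (warped gB gF f (γ u)).det) (hf₀ : f (basePt (γ u)) ≠ 0)
    (hB : ∀ a c, DifferentiableAt ℝ (fun y => gB y a c) (basePt (γ u)))
    (hf : DifferentiableAt ℝ f (basePt (γ u)))
    (hF : ∀ i j, DifferentiableAt ℝ (fun y => gF y i j) (fibPt (γ u))) (b : Fin d₁)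
    (hV : covD (warped gB gF f) γ V u (Sum.inl b) = 0)
    (horth : sq (warped gB gF f) (γ u) (vel γ u) (V u) = 0) :
    covD gB (baseCurve γ) (baseCurve V) u b
      = -sq gB (basePt (γ u)) (vel (baseCurve γ) u) (baseCurve V u)
        * gradVec gB (fun y => Real.log (f y)) (basePt (γ u)) b := by
  rw [covD_baseCurve_eq_of_covD_warped_eq_zero hx hf₀ hB hf hF b hV, horth, zero_sub, mul_assoc,
    gradVec_log gB hf hf₀, Pi.smul_apply, smul_eq_mul]

end WarpedProduct

theorem parallel_transport_along_geodesic_general {d₁ d₂ : ℕ}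
    {gB : (Fin d₁ → ℝ) → Matrix (Fin d₁) (Fin d₁) ℝ}
    {gF : (Fin d₂ → ℝ) → Matrix (Fin d₂) (Fin d₂) ℝ} {f : (Fin d₁ → ℝ) → ℝ}
    (hB : MetricOfClass 1 gB) (hF : MetricOfClass 1 gF) (hf : ContDiff ℝ 1 f)
    (hfpos : ∀ y, 0 < f y) {γ : ℝ → (Fin d₁ ⊕ Fin d₂) → ℝ} (hγ : Differentiable ℝ γ)
    (hvel : Differentiable ℝ (vel γ)) (hgeo : IsGeodesic (warped gB gF f) γ)
    {E : ℝ → (Fin d₁ ⊕ Fin d₂) → ℝ} (hE : Differentiable ℝ E)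
    (hEp : IsParallel (warped gB gF f) γ E) :
    (∀ u, sq (warped gB gF f) (γ u) (vel γ u) (E u)
      = sq (warped gB gF f) (γ 0) (vel γ 0) (E 0)) ∧
    (∀ u b, covD gB (baseCurve γ) (baseCurve E) u b
      = (sq (warped gB gF f) (γ 0) (vel γ 0) (E 0)
          - sq gB (basePt (γ u)) (vel (baseCurve γ) u) (baseCurve E u))
        * (f (basePt (γ u)))⁻¹ * gradVec gB f (basePt (γ u)) b) ∧
    (sq (warped gB gF f) (γ 0) (vel γ 0) (E 0) = 0 →
      ∀ u b, covD gB (baseCurve γ) (baseCurve E) u b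
        = -sq gB (basePt (γ u)) (vel (baseCurve γ) u) (baseCurve E u)
          * gradVec gB (fun y => Real.log (f y)) (basePt (γ u)) b) ∧
    (sq (warped gB gF f) (γ 0) (vel γ 0) (E 0) = 0 →
      baseCurve E 0 = 0 → ∀ u, baseCurve E u = 0) := by
  have hf₀ : ∀ y, f y ≠ 0 := fun y => (hfpos y).ne'
  have hfd : Differentiable ℝ f := hf.differentiable one_ne_zero
  have hg : MetricOfClass 1 (warped gB gF f) := hB.warped hF hf hf₀
  have hconst u := hg.sq_eq_of_isParallel hγ hvel hE hgeo hEp u 0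
  have htransport u b := covD_baseCurve_eq_of_covD_warped_eq_zero (hg.isUnit_det (γ u))
    (hf₀ _) hB.differentiableAt (hfd _) hF.differentiableAt b (hEp u _)
  have hlog ha u b := covD_baseCurve_eq_neg_sq_mul_gradVec_log (hg.isUnit_det (γ u))
    (hf₀ _) hB.differentiableAt (hfd _) hF.differentiableAt b (hEp u _) ((hconst u).trans ha)
  exact ⟨hconst, fun u b => hconst u ▸ htransport u b, hlog, fun ha =>
    hB.eq_zero_of_covD_eq_neg_sq_mul_gradVec (hf.log hf₀) (differentiable_baseCurve hγ).continuous
      (differentiable_baseCurve hvel).continuous (differentiable_baseCurve hE) (hlog ha)⟩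

/-- Along an affinely parametrized geodesic of a warped product,
for a parallelly transported field `E`: the product `g(N,E)` is constant equal to
`a := g(N(0), E(0))`; the base component satisfies the transport equation
`N̂^a∇̂_aE^b = (a − ĝ(N̂,Ê)) f⁻¹ (grad f)^b`; if `a = 0` this reduces to
`N̂^b∇̂_bÊ^a = −(ĝ_{bc}N̂^bÊ^c) ∇̂^a(ln f)`; and if moreover `Ê(0) = 0` then
`Ê(u) = 0` for all `u`. -/
theorem parallel_transport_along_geodesic {d₁ d₂ : ℕ}
    (gB : (Fin d₁ → ℝ) → Matrix (Fin d₁) (Fin d₁) ℝ)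
    (gF : (Fin d₂ → ℝ) → Matrix (Fin d₂) (Fin d₂) ℝ)
    (f : (Fin d₁ → ℝ) → ℝ)
    (hB : SmoothMetric gB) (hF : SmoothMetric gF)
    (hf : ContDiff ℝ (⊤ : ℕ∞) f) (hfpos : ∀ y, 0 < f y)
    (γ : ℝ → (Fin d₁ ⊕ Fin d₂) → ℝ) (hγs : SmoothCurve γ)
    (hgeo : IsGeodesic (warped gB gF f) γ)
    (E : ℝ → (Fin d₁ ⊕ Fin d₂) → ℝ) (hEs : SmoothCurve E)
    (hE : IsParallel (warped gB gF f) γ E) :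
    (∀ u : ℝ, sq (warped gB gF f) (γ u) (vel γ u) (E u)
        = sq (warped gB gF f) (γ 0) (vel γ 0) (E 0)) ∧
    (∀ (u : ℝ) (b : Fin d₁),
      deriv (fun w => E w (Sum.inl b)) u
          + ∑ a, ∑ c, Γc gB b a c (basePt (γ u)) * vel (baseCurve γ) u a * E u (Sum.inl c)
        = (sq (warped gB gF f) (γ 0) (vel γ 0) (E 0)
              - sq gB (basePt (γ u)) (vel (baseCurve γ) u) (fun c => E u (Sum.inl c)))
            * (f (basePt (γ u)))⁻¹
            * (∑ c, ginv gB (basePt (γ u)) b c * pd f c (basePt (γ u)))) ∧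
    (sq (warped gB gF f) (γ 0) (vel γ 0) (E 0) = 0 →
      ∀ (u : ℝ) (b : Fin d₁),
        deriv (fun w => E w (Sum.inl b)) u
            + ∑ a, ∑ c, Γc gB b a c (basePt (γ u)) * vel (baseCurve γ) u a * E u (Sum.inl c)
          = -(sq gB (basePt (γ u)) (vel (baseCurve γ) u) (fun c => E u (Sum.inl c)))
              * (∑ c, ginv gB (basePt (γ u)) b c
                  * pd (fun y => Real.log (f y)) c (basePt (γ u)))) ∧
    (sq (warped gB gF f) (γ 0) (vel γ 0) (E 0) = 0 →
      (∀ b, E 0 (Sum.inl b) = 0) → ∀ (u : ℝ) (b : Fin d₁), E u (Sum.inl b) = 0) := by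
  obtain ⟨h_const, h_transport, h_log, h_zero⟩ := parallel_transport_along_geodesic_general
    (hB.metricOfClass 1) (hF.metricOfClass 1) (hf.of_le (by simp)) hfpos hγs.differentiable
    hγs.vel.differentiable hgeo hEs.differentiable hE
  exact ⟨h_const, h_transport, h_log, fun ha h₀ u => congrFun (h_zero ha (funext h₀) u)⟩

end Paper
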